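/- arXiv:1812.00241 — 6 statements merged into one kernel-verified Lean document; each statement's English description precedes it below -/
import Mathlib

section
/- Let S be a set system on [n] = {1,...,n}, let Z ⊆ [n] be a subset, and let k ≥ 1 be an integer. Suppose that for every i ∈ Z there exists a set S ∈ S such that i ∈ S and |Z ∩ S| ≤ k (i.e., every index of Z is 'k-needed' by some set of the system). Then |Z| ≤ k · HHdim(S). -/
/-!
Choose for every `i ∈ Z` a member `f i ∋ i` of the system with `|Z ∩ f i| ≤ k`, and take an
inclusion-minimal family of these sets covering `Z`, indexed by `C`. Each covers at most `k`
points of `Z`, so `|Z| ≤ k * |C|`. By minimality every `f i` with `i ∈ C` contains a private point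
`w i ∈ Z`, lying in no other chosen set. The set of private points therefore meets `f i` exactly in
`w i`, so its indicator vector has at least `|C|` heavy hitters, i.e. `|C| ≤ HHdim S`.
-/

/-- The support of a vector `v`: the set of its non-zero coordinates. -/
def vecSupp {α : Type*} (v : α → ℝ) : Set α := {i | v i ≠ 0}

/-- The set of heavy hitters of `v` induced by the set system `S`:
indices `i` such that some member `s ∈ S` satisfies `supp(v) ∩ s = {i}`. -/
def HHset {α : Type*} (S : Set (Set α)) (v : α → ℝ) : Set α :=
  {i | ∃ s ∈ S, vecSupp v ∩ s = {i}}

/-- The heavy-hitter dimension of a set system: the supremum over vectors `v`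
of the number of heavy hitters induced by `S`. -/
noncomputable def HHdim {α : Type*} (S : Set (Set α)) : ℕ :=
  sSup {k | ∃ v : α → ℝ, (HHset S v).ncard = k}

/-- The supremum defining `HHdim` is an upper bound on a finite ground set; boundedness matters
because `sSup` of an unbounded set of naturals is `0`. -/
lemma ncard_HHset_le_HHdim {n : ℕ} (S : Set (Set (Fin n))) (v : Fin n → ℝ) :
    (HHset S v).ncard ≤ HHdim S := by
  refine le_csSup ⟨n, ?_⟩ ⟨v, rfl⟩
  rintro _ ⟨u, rfl⟩
  simpa using Set.ncard_le_card (HHset S u)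

/-- If every index `i ∈ Z` is `k`-needed by some set of the system
(i.e. there is `s ∈ S` with `i ∈ s` and `|Z ∩ s| ≤ k`), then `|Z| ≤ k · HHdim(S)`. -/
theorem ncard_le_mul_HHdim {n k : ℕ} (hk : 1 ≤ k)
    (S : Set (Set (Fin n))) (Z : Set (Fin n))
    (hZ : ∀ i ∈ Z, ∃ s ∈ S, i ∈ s ∧ (Z ∩ s).ncard ≤ k) :
    Z.ncard ≤ k * HHdim S := by
  classical
  choose! f hfS hif hfk using hZ
  -- A minimal subfamily covering `Z`; all of `Z` indexes a cover since `i ∈ f i`.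
  obtain ⟨C, hC⟩ : ∃ C : Finset (Fin n),
      Minimal (fun C : Finset (Fin n) => ↑C ⊆ Z ∧ ∀ z ∈ Z, ∃ i ∈ C, z ∈ f i) C := by
    refine exists_minimal_of_wellFoundedLT _ ⟨Z.toFinset, by simp, fun z hz => ⟨z, ?_⟩⟩
    simpa [hz] using hif z hz
  obtain ⟨hCZ, hcov⟩ := hC.prop
  have hpriv : ∀ i ∈ C, ∃ z ∈ Z, z ∈ f i ∧ ∀ j ∈ C, z ∈ f j → j = i := by
    intro i hi
    by_contra! hcon
    have hsub : C ≤ C.erase i := by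
      refine hC.le_of_le ⟨fun x hx => hCZ (Finset.mem_of_mem_erase hx), fun z hz => ?_⟩
        (Finset.erase_subset i C)
      obtain ⟨j, hj, hzj⟩ := hcov z hz
      by_cases hji : j = i
      · obtain ⟨l, hl, hzl, hli⟩ := hcon z hz (hji ▸ hzj)
        exact ⟨l, Finset.mem_erase.2 ⟨hli, hl⟩, hzl⟩
      · exact ⟨j, Finset.mem_erase.2 ⟨hji, hj⟩, hzj⟩
    exact Finset.notMem_erase i C (hsub hi)
  choose! w hwZ hwf hwu using hpriv
  have hwinj : Set.InjOn w C := fun i hi j hj hij =>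
    hwu j hj i hi (hij ▸ hwf i hi)
  have hCdim : C.card ≤ HHdim S := by
    refine le_trans ?_ (ncard_HHset_le_HHdim S (Set.indicator (w '' C) 1))
    rw [← Set.ncard_coe_finset C, ← hwinj.ncard_image]
    refine Set.ncard_le_ncard ?_ (Set.toFinite _)
    rintro _ ⟨i, hi, rfl⟩
    have hsupp : vecSupp (Set.indicator (w '' C) (1 : Fin n → ℝ)) = w '' C := by
      ext x
      simp [vecSupp]
    refine ⟨f i, hfS i (hCZ hi), ?_⟩
    rw [hsupp]
    ext x
    constructor
    · rintro ⟨⟨j, hj, rfl⟩, hx⟩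
      rw [hwu j hj i hi hx]
      rfl
    · rintro rfl
      exact ⟨⟨i, hi, rfl⟩, hwf i hi⟩
  have hZC : Z.ncard ≤ C.card * k := by
    have hsub : Z.toFinset ⊆ C.biUnion fun i => (Z ∩ f i).toFinset := by
      intro z hz
      have hz' : z ∈ Z := by simpa using hz
      obtain ⟨i, hi, hzi⟩ := hcov z hz'
      exact Finset.mem_biUnion.2 ⟨i, hi, Set.mem_toFinset.2 ⟨hz', hzi⟩⟩
    rw [Set.ncard_eq_toFinset_card']
    refine (Finset.card_le_card hsub).trans (Finset.card_biUnion_le_card_mul _ _ _ fun i hi => ?_)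
    rw [← Set.ncard_eq_toFinset_card']
    exact hfk i (hCZ hi)
  calc Z.ncard ≤ C.card * k := hZC
    _ = k * C.card := Nat.mul_comm _ _
    _ ≤ k * HHdim S := Nat.mul_le_mul_left k hCdim
end

section
/- For every set system S ⊆ 2^[n], HHdim(S) equals the maximum integer k for which there exist k distinct indices j₁,...,j_k ∈ [n] and k sets S₁,...,S_k ∈ S such that for all l, m ∈ {1,...,k}, one has j_l ∈ S_m if and only if l = m (equivalently, the maximum size of a submatrix of the incidence matrix of S that is a permutation matrix); here the maximum over the empty collection is 0. -/
/-- `HHdim S` equals the maximum `k` for which there are `k` distinct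
indices `j₁,…,j_k` and sets `T₁,…,T_k ∈ S` with `j_l ∈ T_m ↔ l = m`
(a permutation submatrix of the incidence matrix); the maximum over the empty
collection is `0`. -/
theorem HHdim_eq_max_permutation_submatrix {n : ℕ} (S : Set (Set (Fin n))) :
    HHdim S = sSup {k : ℕ | ∃ (j : Fin k → Fin n) (T : Fin k → Set (Fin n)),
      Function.Injective j ∧ (∀ m, T m ∈ S) ∧ ∀ l m, j l ∈ T m ↔ l = m} := by
  unfold HHdim
  congr 1
  ext k
  constructor
  · rintro ⟨v, hv⟩
    let e : Fin k ≃ HHset S v := (Finite.equivFinOfCardEq hv).symm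
    choose T hT using fun m => (e m).2
    -- Each heavy hitter lies in the support, so `T m` meets the chosen columns only in `e m`.
    have hsupp : ∀ l, (e l : Fin n) ∈ vecSupp v := fun l =>
      ((hT l).2.symm.subset (Set.mem_singleton _)).1
    refine ⟨fun l => e l, T, Subtype.val_injective.comp e.injective, fun m => (hT m).1,
      fun l m => ⟨fun h => ?_, ?_⟩⟩
    · exact e.injective (Subtype.ext ((hT m).2.subset ⟨hsupp l, h⟩))
    · rintro rfl
      exact ((hT l).2.symm.subset (Set.mem_singleton _)).2
  · rintro ⟨j, T, hj, hTS, hjT⟩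
    classical
    refine ⟨(Set.range j).indicator 1, ?_⟩
    have hsupp : vecSupp ((Set.range j).indicator (1 : Fin n → ℝ)) = Set.range j := by
      ext i
      simp [vecSupp, Set.indicator_apply]
    have hHH : HHset S ((Set.range j).indicator 1) = Set.range j := by
      ext i
      constructor
      · rintro ⟨s, -, hs⟩
        rw [hsupp] at hs
        exact (hs.symm.subset (Set.mem_singleton i)).1
      · rintro ⟨l, rfl⟩
        refine ⟨T l, hTS l, ?_⟩
        rw [hsupp]
        ext i
        constructor
        · rintro ⟨⟨m, rfl⟩, hm⟩
          rw [(hjT m l).1 hm]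
          rfl
        · rintro rfl
          exact ⟨⟨l, rfl⟩, (hjT l l).2 rfl⟩
    rw [hHH, ← Nat.card_coe_set_eq, Nat.card_range_of_injective hj, Nat.card_fin]
end

section
/- Let n be an even positive integer and let S_int = {[a, a + n/2] : a = 1, ..., n/2} be the family of all intervals of n/2 + 1 consecutive integers in [n] starting at a ∈ {1,...,n/2}. Then HHdim(S_int) ≤ 3. -/
/-- Two distinct heavy hitters are separated by the points `m` and `m + 1` common to all intervals
of the family. -/
lemma heavy_hitters_separated {m : ℕ} {v : ℕ → ℝ} {x y : ℕ}
    (hx : x ∈ HHset {s : Set ℕ | ∃ a : ℕ, 1 ≤ a ∧ a ≤ m ∧ s = Set.Icc a (a + m)} v)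
    (hy : y ∈ HHset {s : Set ℕ | ∃ a : ℕ, 1 ≤ a ∧ a ≤ m ∧ s = Set.Icc a (a + m)} v)
    (hxy : x < y) : x < m ∧ m + 1 < y := by
  obtain ⟨_, ⟨a, ha1, ham, rfl⟩, ha⟩ := hx
  obtain ⟨_, ⟨b, hb1, hbm, rfl⟩, hb⟩ := hy
  have hxa : x ∈ vecSupp v ∩ Set.Icc a (a + m) := ha ▸ Set.mem_singleton x
  have hyb : y ∈ vecSupp v ∩ Set.Icc b (b + m) := hb ▸ Set.mem_singleton y
  have hya : ¬ (a ≤ y ∧ y ≤ a + m) := fun h => by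
    have h' : y ∈ ({x} : Set ℕ) := ha ▸ ⟨hyb.1, h⟩
    exact hxy.ne' h'
  have hxb : ¬ (b ≤ x ∧ x ≤ b + m) := fun h => by
    have h' : x ∈ ({y} : Set ℕ) := hb ▸ ⟨hxa.1, h⟩
    exact hxy.ne h'
  have h1 := Set.mem_Icc.1 hxa.2
  have h2 := Set.mem_Icc.1 hyb.2
  omega

/-- For even `n > 0`, the family of intervals
`[a, a + n/2]` for `a = 1, …, n/2` (intervals of `n/2 + 1` consecutive
integers in `[n]`) has heavy-hitter dimension at most `3`. -/
theorem HHdim_half_intervals_le_three (n : ℕ) (hn : 0 < n) (he : Even n) :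
    HHdim {s : Set ℕ | ∃ a : ℕ, 1 ≤ a ∧ a ≤ n / 2 ∧ s = Set.Icc a (a + n / 2)} ≤ 3 := by
  refine csSup_le' ?_
  rintro k ⟨v, rfl⟩
  by_contra! h
  obtain ⟨x, y, z, hx, hy, hz, hxy, hxz, hyz⟩ :=
    (Set.two_lt_ncard_iff (Set.finite_of_ncard_pos (pos_of_gt h))).1 (lt_trans (by norm_num) h)
  have h1 := heavy_hitters_separated hx hy
  have h2 := heavy_hitters_separated hy hx
  have h3 := heavy_hitters_separated hx hz
  have h4 := heavy_hitters_separated hz hx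
  have h5 := heavy_hitters_separated hy hz
  have h6 := heavy_hitters_separated hz hy
  omega
end

section
/- Let n ≥ 1 and 0 ≤ k ≤ n − 1 be integers, and let S = { S ⊆ [n] : |S| ≥ n − k } be the family of all subsets of [n] missing at most k coordinates. Then HHdim(S) = k + 1. -/
theorem HHset_subset_vecSupp {α : Type*} (S : Set (Set α)) (v : α → ℝ) :
    HHset S v ⊆ vecSupp v := by
  rintro i ⟨s, -, hs⟩
  have hi : i ∈ vecSupp v ∩ s := hs ▸ Set.mem_singleton i
  exact hi.1

theorem HHset_ncard_le {n k : ℕ} (v : Fin n → ℝ) :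
    (HHset {s : Set (Fin n) | n - k ≤ s.ncard} v).ncard ≤ k + 1 := by
  rcases (HHset {s : Set (Fin n) | n - k ≤ s.ncard} v).eq_empty_or_nonempty with h | ⟨i, s, hs, hi⟩
  · rw [h, Set.ncard_empty]
    exact Nat.zero_le _
  · refine (Set.ncard_le_ncard (HHset_subset_vecSupp _ v)).trans ?_
    have h1 := Set.ncard_union_add_ncard_inter (vecSupp v) s
    have h2 : (vecSupp v ∪ s).ncard ≤ n := by
      simpa using Set.ncard_le_card (vecSupp v ∪ s)
    rw [hi, Set.ncard_singleton] at h1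
    have h3 : n - k ≤ s.ncard := hs
    omega

/-- The indicator vector of a `(k + 1)`-element set attains the upper bound. -/
theorem exists_HHset_ncard_eq {n k : ℕ} (hk : k + 1 ≤ n) :
    ∃ v : Fin n → ℝ, (HHset {s : Set (Fin n) | n - k ≤ s.ncard} v).ncard = k + 1 := by
  classical
  obtain ⟨T, -, hT⟩ := Set.exists_subset_card_eq (s := (Set.univ : Set (Fin n))) (n := k + 1)
    (by rwa [Set.ncard_univ, Nat.card_eq_fintype_card, Fintype.card_fin])
  have hsupp : vecSupp (T.indicator (1 : Fin n → ℝ)) = T := by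
    ext i
    simp [vecSupp]
  refine ⟨T.indicator 1, ?_⟩
  suffices h : HHset {s : Set (Fin n) | n - k ≤ s.ncard} (T.indicator 1) = T by rw [h, hT]
  refine Set.Subset.antisymm ((HHset_subset_vecSupp _ _).trans hsupp.subset) fun i hi => ?_
  refine ⟨insert i Tᶜ, ?_, ?_⟩
  · have h1 : (insert i Tᶜ).ncard = Tᶜ.ncard + 1 := Set.ncard_insert_of_notMem (by simpa using hi)
    have h2 := Set.ncard_add_ncard_compl T
    rw [Nat.card_eq_fintype_card, Fintype.card_fin] at h2
    change n - k ≤ (insert i Tᶜ).ncard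
    omega
  · rw [hsupp]
    ext j
    simp only [Set.mem_inter_iff, Set.mem_insert_iff, Set.mem_compl_iff, Set.mem_singleton_iff]
    constructor
    · rintro ⟨hj, rfl | hj'⟩
      · rfl
      · exact absurd hj hj'
    · rintro rfl
      exact ⟨hi, Or.inl rfl⟩

/-- For `1 ≤ n` and `0 ≤ k ≤ n - 1`, the family of all subsets of
`[n]` of size at least `n - k` (i.e. missing at most `k` coordinates) has
heavy-hitter dimension exactly `k + 1`. -/
theorem HHdim_sets_missing_few {n k : ℕ} (hn : 1 ≤ n) (hk : k ≤ n - 1) :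
    HHdim {s : Set (Fin n) | n - k ≤ s.ncard} = k + 1 := by
  have hg : IsGreatest
      {m | ∃ v : Fin n → ℝ, (HHset {s : Set (Fin n) | n - k ≤ s.ncard} v).ncard = m} (k + 1) := by
    refine ⟨exists_HHset_ncard_eq (by omega), ?_⟩
    rintro m ⟨v, rfl⟩
    exact HHset_ncard_le v
  exact hg.csSup_eq
end

section
/- For any two non-empty set systems S₁, S₂ ⊆ 2^[n], the union-product system satisfies HHdim({ S₁ ∪ S₂ : S₁ ∈ S₁, S₂ ∈ S₂ }) ≤ HHdim(S₁) + HHdim(S₂). -/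
theorem HHset_image2_union_subset {α : Type*} (S₁ S₂ : Set (Set α)) (v : α → ℝ) :
    HHset (Set.image2 (· ∪ ·) S₁ S₂) v ⊆ HHset S₁ v ∪ HHset S₂ v := by
  rintro i ⟨_, ⟨s, hs, t, ht, rfl⟩, h⟩
  have hi : i ∈ vecSupp v ∩ (s ∪ t) := h ▸ Set.mem_singleton i
  rcases hi with ⟨hv, his | hit⟩
  · exact Or.inl ⟨s, hs, (h ▸ Set.inter_subset_inter_right _ Set.subset_union_left :
      vecSupp v ∩ s ⊆ {i}).antisymm (Set.singleton_subset_iff.2 ⟨hv, his⟩)⟩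
  · exact Or.inr ⟨t, ht, (h ▸ Set.inter_subset_inter_right _ Set.subset_union_right :
      vecSupp v ∩ t ⊆ {i}).antisymm (Set.singleton_subset_iff.2 ⟨hv, hit⟩)⟩

/-- On a finite ground set the supremum defining `HHdim` is over a bounded set, so it is a genuine
upper bound rather than the default value `0` of `sSup` on unbounded sets of naturals. -/
theorem HHset_ncard_le_HHdim {α : Type*} [Finite α] (S : Set (Set α)) (v : α → ℝ) :
    (HHset S v).ncard ≤ HHdim S := by
  refine le_csSup ⟨Nat.card α, ?_⟩ ⟨v, rfl⟩
  rintro _ ⟨w, rfl⟩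
  exact Set.ncard_le_card _

/-- For non-empty set systems `S₁, S₂`, the union-product system
`{ s₁ ∪ s₂ : s₁ ∈ S₁, s₂ ∈ S₂ }` satisfies
`HHdim ≤ HHdim(S₁) + HHdim(S₂)`. -/
theorem HHdim_union_product_le {n : ℕ} (S₁ S₂ : Set (Set (Fin n)))
    (h₁ : S₁.Nonempty) (h₂ : S₂.Nonempty) :
    HHdim (Set.image2 (· ∪ ·) S₁ S₂) ≤ HHdim S₁ + HHdim S₂ := by
  refine csSup_le ⟨_, 0, rfl⟩ ?_
  rintro _ ⟨v, rfl⟩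
  calc (HHset (Set.image2 (· ∪ ·) S₁ S₂) v).ncard
      ≤ (HHset S₁ v ∪ HHset S₂ v).ncard :=
        Set.ncard_le_ncard (HHset_image2_union_subset S₁ S₂ v) (Set.toFinite _)
    _ ≤ (HHset S₁ v).ncard + (HHset S₂ v).ncard := Set.ncard_union_le _ _
    _ ≤ HHdim S₁ + HHdim S₂ :=
        add_le_add (HHset_ncard_le_HHdim S₁ v) (HHset_ncard_le_HHdim S₂ v)
end

section
/- Let 1 ≤ k ≤ n be integers and let F_k = { [i, i'] ⊆ [n] : i' − i + 1 ≥ k } be the family of all intervals in [n] of length at least k. Then ⌊n/k⌋ ≤ HHdim(F_k) ≤ 2n/k. -/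
/-- The intervals in `[n]` of length at least `k`. -/
abbrev longIntervals (n k : ℕ) : Set (Set ℕ) :=
  {s : Set ℕ | ∃ i i' : ℕ, 1 ≤ i ∧ i' ≤ n ∧ i + k ≤ i' + 1 ∧ s = Set.Icc i i'}

lemma mem_HHset_longIntervals {n k h : ℕ} {v : ℕ → ℝ} (hh : h ∈ HHset (longIntervals n k) v) :
    ∃ i i' : ℕ, 1 ≤ i ∧ i' ≤ n ∧ i + k ≤ i' + 1 ∧ i ≤ h ∧ h ≤ i' ∧ v h ≠ 0 ∧
      ∀ x, i ≤ x → x ≤ i' → v x ≠ 0 → x = h := by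
  obtain ⟨s, ⟨i, i', h1, h2, h3, rfl⟩, hs⟩ := hh
  have hmem : h ∈ vecSupp v ∩ Set.Icc i i' := by rw [hs]; rfl
  refine ⟨i, i', h1, h2, h3, hmem.2.1, hmem.2.2, hmem.1, fun x hx hx' hv => ?_⟩
  have hx'' : x ∈ vecSupp v ∩ Set.Icc i i' := ⟨hv, hx, hx'⟩
  rw [hs] at hx''
  exact hx''

lemma HHset_longIntervals_finite (n k : ℕ) (v : ℕ → ℝ) :
    (HHset (longIntervals n k) v).Finite := by
  refine (Set.finite_Icc 1 n).subset fun h hh => ?_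
  obtain ⟨i, i', h1, h2, -, h4, h5, -⟩ := mem_HHset_longIntervals hh
  exact ⟨h1.trans h4, h5.trans h2⟩

/-- The double-counting bound: every point lies in at most two of the chosen intervals. -/
lemma ncard_HHset_longIntervals_mul_le (n k : ℕ) (v : ℕ → ℝ) :
    (HHset (longIntervals n k) v).ncard * k ≤ n * 2 := by
  have hfin := HHset_longIntervals_finite n k v
  rw [Set.ncard_eq_toFinset_card _ hfin]
  have key : ∀ h, ∃ i i' : ℕ, h ∈ HHset (longIntervals n k) v →
      1 ≤ i ∧ i' ≤ n ∧ i + k ≤ i' + 1 ∧ i ≤ h ∧ h ≤ i' ∧ v h ≠ 0 ∧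
      ∀ x, i ≤ x → x ≤ i' → v x ≠ 0 → x = h := by
    intro h
    by_cases hh : h ∈ HHset (longIntervals n k) v
    · obtain ⟨i, i', H⟩ := mem_HHset_longIntervals hh
      exact ⟨i, i', fun _ => H⟩
    · exact ⟨0, 0, fun h' => absurd h' hh⟩
  choose l r H using key
  have := Finset.card_mul_le_card_mul (s := hfin.toFinset) (t := Finset.Icc 1 n)
    (fun h x => l h ≤ x ∧ x ≤ r h) (m := k) (n := 2) ?_ ?_
  · simpa using this
  · intro h hh
    obtain ⟨h1, h2, h3, -⟩ := H h (by simpa using hh)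
    have hsub : Finset.Icc (l h) (r h) ⊆
        Finset.bipartiteAbove (fun h x => l h ≤ x ∧ x ≤ r h) (Finset.Icc 1 n) h := by
      intro x hx
      simp only [Finset.mem_Icc, Finset.mem_bipartiteAbove] at hx ⊢
      omega
    have hcard := Finset.card_le_card hsub
    rw [Nat.card_Icc] at hcard
    omega
  · intro x _
    by_contra hlt
    obtain ⟨a, b, c, ha, hb, hc, hab, hac, hbc⟩ := Finset.two_lt_card_iff.1 (not_le.1 hlt)
    simp only [Finset.mem_bipartiteBelow, Set.Finite.mem_toFinset] at ha hb hc
    obtain ⟨-, -, -, a1, a2, av, aH⟩ := H a ha.1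
    obtain ⟨-, -, -, b1, b2, bv, bH⟩ := H b hb.1
    obtain ⟨-, -, -, c1, c2, cv, cH⟩ := H c hc.1
    have ab := fun p q => aH b p q bv
    have ac := fun p q => aH c p q cv
    have ba := fun p q => bH a p q av
    have bc := fun p q => bH c p q cv
    have ca := fun p q => cH a p q av
    have cb := fun p q => cH b p q bv
    omega

lemma le_ncard_HHset_multiples (n k : ℕ) (hk : 1 ≤ k) :
    n / k ≤ (HHset (longIntervals n k) (fun i => if k ∣ i then 1 else 0)).ncard := by
  have hinj : Function.Injective fun j : ℕ => k * j + k := by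
    intro a b hab
    exact Nat.eq_of_mul_eq_mul_left hk (Nat.add_right_cancel hab)
  have hsub : (((Finset.range (n / k)).image fun j => k * j + k : Finset ℕ) : Set ℕ) ⊆
      HHset (longIntervals n k) (fun i => if k ∣ i then 1 else 0) := by
    intro h hh
    simp only [Finset.coe_image, Finset.coe_range, Set.mem_image, Set.mem_Iio] at hh
    obtain ⟨j, hj, rfl⟩ := hh
    have hle : k * j + k ≤ n := by
      calc k * j + k = k * (j + 1) := by ring
        _ ≤ k * (n / k) := Nat.mul_le_mul_left k hj
        _ ≤ n := Nat.mul_div_le n k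
    refine ⟨Set.Icc (k * j + 1) (k * j + k), ⟨_, _, by omega, hle, by omega, rfl⟩, ?_⟩
    ext x
    simp only [vecSupp, Set.mem_inter_iff, Set.mem_ofPred_eq, Set.mem_Icc, Set.mem_singleton_iff,
      ne_eq, ite_eq_right_iff, one_ne_zero, imp_false, not_not]
    constructor
    · rintro ⟨⟨q, rfl⟩, h1, h2⟩
      have hq1 : j < q := Nat.lt_of_mul_lt_mul_left (a := k) (by omega)
      have hq2 : q ≤ j + 1 := Nat.le_of_mul_le_mul_left (c := k) (by rw [mul_add k j 1]; omega) hk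
      obtain rfl : q = j + 1 := by omega
      ring
    · rintro rfl
      exact ⟨⟨j + 1, by ring⟩, by omega, le_rfl⟩
  have hcard := Set.ncard_le_ncard hsub (HHset_longIntervals_finite n k _)
  rwa [Set.ncard_coe_finset, Finset.card_image_of_injective _ hinj, Finset.card_range] at hcard

/-- For `1 ≤ k ≤ n`, the family of all intervals `[i, i'] ⊆ [n]` of
length `i' - i + 1 ≥ k` has heavy-hitter dimension between `⌊n/k⌋` and `2n/k`. -/
theorem HHdim_long_intervals (n k : ℕ) (hk : 1 ≤ k) (hkn : k ≤ n) :
    n / k ≤ HHdim {s : Set ℕ | ∃ i i' : ℕ, 1 ≤ i ∧ i' ≤ n ∧ i + k ≤ i' + 1 ∧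
        s = Set.Icc i i'} ∧
      (HHdim {s : Set ℕ | ∃ i i' : ℕ, 1 ≤ i ∧ i' ≤ n ∧ i + k ≤ i' + 1 ∧
        s = Set.Icc i i'} : ℝ) ≤ 2 * n / k := by
  change n / k ≤ HHdim (longIntervals n k) ∧ (HHdim (longIntervals n k) : ℝ) ≤ 2 * n / k
  have hbound : ∀ m ∈ {m | ∃ v : ℕ → ℝ, (HHset (longIntervals n k) v).ncard = m},
      m ≤ n * 2 / k := by
    rintro m ⟨v, rfl⟩
    exact (Nat.le_div_iff_mul_le hk).2 (ncard_HHset_longIntervals_mul_le n k v)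
  constructor
  · exact (le_ncard_HHset_multiples n k hk).trans (le_csSup ⟨_, hbound⟩ ⟨_, rfl⟩)
  · have hle : HHdim (longIntervals n k) ≤ n * 2 / k := csSup_le ⟨_, 0, rfl⟩ hbound
    have hmul := (Nat.le_div_iff_mul_le hk).1 hle
    rw [le_div_iff₀ (by exact_mod_cast hk), mul_comm (2 : ℝ)]
    exact_mod_cast hmul
end
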